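/- Let X ⊂ P^N be a non-degenerate scroll over a base W with scroll fibres F_w, and let z be a smooth point of SX. If the entry locus Σ_z meets every fibre F_w, then SX = P^N. -/

import Mathlib

/-! The theorem is Terracini's lemma combined with a semicontinuity argument. Put
`T = T_z SX`.

If `z ∈ X`, every line through `z` and a point of `X` lies in `SX`, so the cone over `X` lies
in `T`. If `z ∉ X`, then for every point `x ∈ X` on a secant line through `z` one has
`T_x X ⊆ T` (`tangentAt_le_of_join`, the inclusion in Terracini's lemma, which needs no genericity
once `z` differs from the second point of the secant). Since `X` is smooth, `dim T_x X` is
constant, so `T_x X ⊆ T` is a determinantal, hence Zariski closed, condition on `x`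
(`tangentAt_le_of_mem_zClosure`), and it holds on all of `Σ_z`. Every fibre `F_w` meets `Σ_z` in
some `x`, and `F_w ⊆ T_x X` because `F_w` is linear. Hence the union of the fibres, which is
`X`, again lies in `T`.

In both cases non-degeneracy gives `T = ℂ^{N+1}`. As `z` is a smooth point, the cone over
`SX` has dimension `N + 1`, and a subset of `ℂ^{N+1}` of full dimension contains every
point (`eq_univ_of_le_adim`), by comparison with chains of primes in the polynomial ring. -/

open MvPolynomial

noncomputable section

/-- Affine space `ℂ^{N+1}`. -/
abbrev Aff (N : ℕ) := Fin (N + 1) → ℂ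

/-- Projective `N`-space over `ℂ`. -/
abbrev Proj (N : ℕ) := Projectivization ℂ (Aff N)

/-- Zariski-closed subsets of affine space: common zero loci of polynomials. -/
def zClosed {N : ℕ} (V : Set (Aff N)) : Prop :=
  ∃ S : Set (MvPolynomial (Fin (N + 1)) ℂ), V = {x | ∀ p ∈ S, eval x p = 0}

/-- Zariski closure in affine space. -/
def zClosure {N : ℕ} (V : Set (Aff N)) : Set (Aff N) :=
  ⋂₀ {C | zClosed C ∧ V ⊆ C}

/-- Irreducibility of a subset of affine space w.r.t. the Zariski topology. -/
def zIrred {N : ℕ} (V : Set (Aff N)) : Prop :=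
  V.Nonempty ∧ ∀ C₁ C₂ : Set (Aff N), zClosed C₁ → zClosed C₂ → V ⊆ C₁ ∪ C₂ →
    V ⊆ C₁ ∨ V ⊆ C₂

/-- Dimension of a subset of affine space: Krull dimension of the poset of
irreducible Zariski-closed subsets contained in it. -/
def adim {N : ℕ} (V : Set (Aff N)) : WithBot ℕ∞ :=
  Order.krullDim {W : Set (Aff N) // zClosed W ∧ zIrred W ∧ W ⊆ V}

/-- The affine cone over a set of projective points. -/
def cone {N : ℕ} (X : Set (Proj N)) : Set (Aff N) :=
  {v | ∃ hv : v ≠ 0, Projectivization.mk ℂ v hv ∈ X} ∪ {0}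

/-- A projectively closed set. -/
def pClosed {N : ℕ} (X : Set (Proj N)) : Prop := zClosed (cone X)

/-- Projective Zariski closure. -/
def pClosure {N : ℕ} (X : Set (Proj N)) : Set (Proj N) :=
  {z | z.rep ∈ zClosure (cone X)}

/-- The vanishing ideal (as a set of polynomials) of a subset of `ℂ^ι`. -/
def vanishSet {ι : Type} [Fintype ι] (V : Set (ι → ℂ)) : Set (MvPolynomial ι ℂ) :=
  {p | ∀ v ∈ V, eval v p = 0}

/-- The differential of a polynomial at a point, as a linear form. -/
def polyDiff {ι : Type} [Fintype ι] (v : ι → ℂ) (p : MvPolynomial ι ℂ) :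
    (ι → ℂ) →ₗ[ℂ] ℂ :=
  ∑ i, eval v (pderiv i p) • LinearMap.proj i

/-- The (embedded, affine) Zariski tangent space of `V` at `v`. -/
def tangentAt {ι : Type} [Fintype ι] (V : Set (ι → ℂ)) (v : ι → ℂ) :
    Submodule ℂ (ι → ℂ) :=
  ⨅ p ∈ vanishSet V, LinearMap.ker (polyDiff v p)

/-- The affine cone over the embedded projective tangent space of `X` at `x`. -/
def projTangent {N : ℕ} (X : Set (Proj N)) (x : Proj N) : Submodule ℂ (Aff N) :=
  tangentAt (cone X) x.rep

/-- The embedded projective tangent space `T_x X ⊆ ℙ^N` as a set of points. -/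
def tangentSet {N : ℕ} (X : Set (Proj N)) (x : Proj N) : Set (Proj N) :=
  {z | z.submodule ≤ projTangent X x}

/-- `X` is a closed irreducible smooth projective variety of dimension `n`
(the affine cone has dimension `n+1`, and every embedded tangent space has
linear dimension `n+1`). -/
def SmoothVariety {N : ℕ} (X : Set (Proj N)) (n : ℕ) : Prop :=
  pClosed X ∧ zIrred (cone X) ∧ adim (cone X) = ((n + 1 : ℕ) : WithBot ℕ∞) ∧
    ∀ x ∈ X, Module.finrank ℂ (projTangent X x) = n + 1

/-- Non-degeneracy: `X` is contained in no hyperplane. -/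
def Nondeg {N : ℕ} (X : Set (Proj N)) : Prop :=
  Submodule.span ℂ (cone X) = ⊤

/-- The projective line through two points (all of `ℙ^N` if they coincide... it
is the projectivization of the span of the two representatives). -/
def pline {N : ℕ} (x y : Proj N) : Set (Proj N) :=
  {z | z.submodule ≤ x.submodule ⊔ y.submodule}

/-- The relative secant (join) variety `S(Y,X)`: closure of the union of the
lines joining a point of `Y` to a distinct point of `X`. -/
def joinVar {N : ℕ} (Y X : Set (Proj N)) : Set (Proj N) :=
  pClosure {z | ∃ y ∈ Y, ∃ x ∈ X, y ≠ x ∧ z ∈ pline y x}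

/-- The secant variety `SX`. -/
def secantVar {N : ℕ} (X : Set (Proj N)) : Set (Proj N) := joinVar X X

/-- The relative tangent variety `T(Y,X) = ⋃_{y ∈ Y} T_y X`. -/
def relTangent {N : ℕ} (Y X : Set (Proj N)) : Set (Proj N) :=
  ⋃ y ∈ Y, tangentSet X y

/-- The hyperplane (as a linear subspace of `ℂ^{N+1}`) with coordinate vector `a`. -/
def hypSub {N : ℕ} (a : Aff N) : Submodule ℂ (Aff N) :=
  LinearMap.ker (∑ i, a i • (LinearMap.proj i : (Aff N) →ₗ[ℂ] ℂ))

/-- The dual variety of `X`, identified with a subvariety of `ℙ^N` via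
coordinates of hyperplanes: closure of the set of hyperplanes tangent to `X`
at some point. -/
def dualVar {N : ℕ} (X : Set (Proj N)) : Set (Proj N) :=
  pClosure {h | ∃ x ∈ X, projTangent X x ≤ hypSub h.rep}

/-- The entry locus `Σ_z` of a point `z` of the secant variety. -/
def entryLocus {N : ℕ} (X : Set (Proj N)) (z : Proj N) : Set (Proj N) :=
  pClosure {x | x ∈ X ∧ ∃ x' ∈ X, x ≠ x' ∧ z ∈ pline x x'}

/-- A scroll structure on `X ⊆ ℙ^N`: a smooth base variety `W` (of dimension
`b`, embedded in some projective space) together with a family of disjoint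
linearly embedded fibres of dimension `n - b` covering `X`. -/
structure ScrollOn (N : ℕ) (X : Set (Proj N)) (n b : ℕ) where
  M : ℕ
  W : Set (Proj M)
  baseSmooth : SmoothVariety W b
  fdim : ℕ
  dim_eq : n = b + fdim
  Fsub : Proj M → Submodule ℂ (Aff N)
  fib_rank : ∀ w ∈ W, Module.finrank ℂ (Fsub w) = fdim + 1
  cover : X = ⋃ w ∈ W, {z : Proj N | z.submodule ≤ Fsub w}
  disjoint : ∀ w ∈ W, ∀ w' ∈ W, w ≠ w' →
    ∀ z : Proj N, z.submodule ≤ Fsub w → z.submodule ≤ Fsub w' → False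

/-- The fibre of a scroll over a base point. -/
def ScrollOn.fib {N : ℕ} {X : Set (Proj N)} {n b : ℕ} (S : ScrollOn N X n b)
    (w : Proj S.M) : Set (Proj N) :=
  {z | z.submodule ≤ S.Fsub w}

/-- The coordinate vector of the Segre product of two vectors. -/
def segreVec (a b : ℕ) (y : Fin a → ℂ) (w : Fin b → ℂ) : Fin a × Fin b → ℂ :=
  fun p => y p.1 * w p.2

/-- `X` is (projectively equivalent to) the Segre embedding
`ℙ^{a-1} × ℙ^{b-1} ⊆ ℙ^{ab-1}`. -/
def IsSegre {N : ℕ} (a b : ℕ) (X : Set (Proj N)) : Prop :=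
  ∃ e : (Fin a × Fin b → ℂ) ≃ₗ[ℂ] (Aff N),
    X = {z | ∃ y : Fin a → ℂ, ∃ w : Fin b → ℂ,
      z.submodule = Submodule.span ℂ {e (segreVec a b y w)}}

/-- `X` is an isomorphic projection of the Segre embedding
`ℙ^{a-1} × ℙ^{b-1}`: the image of the Segre variety under a linear projection
which is injective on points and on embedded tangent spaces of the Segre. -/
def IsProjectedSegre {N : ℕ} (a b : ℕ) (X : Set (Proj N)) : Prop :=
  ∃ L : (Fin a × Fin b → ℂ) →ₗ[ℂ] (Aff N),
    (∀ y w, segreVec a b y w ≠ 0 → L (segreVec a b y w) ≠ 0) ∧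
    (∀ y w y' w', segreVec a b y w ≠ 0 → segreVec a b y' w' ≠ 0 →
      Submodule.span ℂ {L (segreVec a b y w)} =
        Submodule.span ℂ {L (segreVec a b y' w')} →
      Submodule.span ℂ {segreVec a b y w} =
        Submodule.span ℂ {segreVec a b y' w'}) ∧
    (∀ y w, segreVec a b y w ≠ 0 →
      Disjoint
        (tangentAt {v | ∃ y' w', v = segreVec a b y' w'} (segreVec a b y w))
        (LinearMap.ker L)) ∧
    X = {z | ∃ y w, segreVec a b y w ≠ 0 ∧
      z.submodule = Submodule.span ℂ {L (segreVec a b y w)}}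

end
noncomputable section

/-- The quadratic Veronese coordinates of a vector in `ℂ³`. -/
def veroQ (y : Fin 3 → ℂ) : Fin 6 → ℂ :=
  ![y 0 * y 0, y 0 * y 1, y 0 * y 2, y 1 * y 1, y 1 * y 2, y 2 * y 2]

/-- `X` is (projectively equivalent to) the Veronese surface in `ℙ⁵`. -/
def IsVeroneseSurface {N : ℕ} (X : Set (Proj N)) : Prop :=
  ∃ h : N + 1 = 6, ∃ g : (Aff N) ≃ₗ[ℂ] (Aff N),
    X = {z | ∃ y : Fin 3 → ℂ, y ≠ 0 ∧
      z.submodule = Submodule.span ℂ {g fun i => veroQ y (Fin.cast h i)}}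

/-- The coordinates of a pure spinor: `(1, x_{ij}, Pf_i(x))` for a skew matrix
with upper entries `x i j` (`i < j`); the affine parametrization of the
10-dimensional spinor variety `S₄ ⊆ ℙ^{15}`. -/
def spinVec (x : Fin 5 → Fin 5 → ℂ) : Fin 16 → ℂ :=
  ![1, x 0 1, x 0 2, x 0 3, x 0 4, x 1 2, x 1 3, x 1 4, x 2 3, x 2 4, x 3 4,
    x 1 2 * x 3 4 - x 1 3 * x 2 4 + x 1 4 * x 2 3,
    x 0 2 * x 3 4 - x 0 3 * x 2 4 + x 0 4 * x 2 3,
    x 0 1 * x 3 4 - x 0 3 * x 1 4 + x 0 4 * x 1 3,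
    x 0 1 * x 2 4 - x 0 2 * x 1 4 + x 0 4 * x 1 2,
    x 0 1 * x 2 3 - x 0 2 * x 1 3 + x 0 3 * x 1 2]

/-- `X` is (projectively equivalent to) the 10-dimensional spinor variety
`S₄ ⊆ ℙ^{15}`. -/
def IsSpinorVariety {N : ℕ} (X : Set (Proj N)) : Prop :=
  ∃ e : (Fin 16 → ℂ) ≃ₗ[ℂ] (Aff N),
    X = pClosure {z | ∃ x : Fin 5 → Fin 5 → ℂ,
      z.submodule = Submodule.span ℂ {e (spinVec x)}}

/-- The vanishing ideal of a subset of affine space. -/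
def vanishIdeal {N : ℕ} (V : Set (Aff N)) : Ideal (MvPolynomial (Fin (N + 1)) ℂ) where
  carrier := vanishSet V
  add_mem' := by intro a b ha hb v hv; simp [vanishSet] at *; simp [ha v hv, hb v hv]
  zero_mem' := by intro v hv; simp
  smul_mem' := by intro c a ha v hv; simp [vanishSet] at *; simp [ha v hv]

/-- Saturation of a homogeneous ideal with respect to the irrelevant ideal. -/
def satIdeal {N : ℕ} (J : Ideal (MvPolynomial (Fin (N + 1)) ℂ)) :
    Ideal (MvPolynomial (Fin (N + 1)) ℂ) where
  carrier := {p | ∃ k : ℕ, ∀ i : Fin (N + 1), (X i) ^ k * p ∈ J}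
  zero_mem' := ⟨0, fun i => by simp⟩
  add_mem' := by
    rintro a b ⟨k, hk⟩ ⟨l, hl⟩
    refine ⟨k + l, fun i => ?_⟩
    have h : (X i : MvPolynomial (Fin (N + 1)) ℂ) ^ (k + l) * (a + b) =
        (X i) ^ l * ((X i) ^ k * a) + (X i) ^ k * ((X i) ^ l * b) := by ring
    rw [h]
    exact J.add_mem (J.mul_mem_left _ (hk i)) (J.mul_mem_left _ (hl i))
  smul_mem' := by
    rintro c a ⟨k, hk⟩
    refine ⟨k, fun i => ?_⟩
    have h : (X i : MvPolynomial (Fin (N + 1)) ℂ) ^ k * (c • a) =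
        c * ((X i) ^ k * a) := by rw [smul_eq_mul]; ring
    rw [h]
    exact J.mul_mem_left _ (hk i)

/-- The projective scheme `Proj` of the quotient by `J` is normal: every
localization at a prime not containing the irrelevant ideal is a normal
domain. -/
def ProjNormal {N : ℕ} (J : Ideal (MvPolynomial (Fin (N + 1)) ℂ)) : Prop :=
  ∀ P : Ideal (MvPolynomial (Fin (N + 1)) ℂ ⧸ J), ∀ hP : P.IsPrime,
    ¬ (Ideal.map (Ideal.Quotient.mk J)
        (Ideal.span (Set.range MvPolynomial.X)) ≤ P) →
      IsDomain (@Localization.AtPrime _ _ P hP) ∧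
      IsIntegrallyClosed (@Localization.AtPrime _ _ P hP)

/-- Data describing an algebraic line bundle on `X ⊆ ℙ^N` by a covering of
`X` by complements of closed sets and degree-zero rational transition
functions satisfying the cocycle condition on `X`. -/
structure LineBundleData (N : ℕ) (X : Set (Proj N)) where
  ι : Type
  Z : ι → Set (Aff N)
  Zclosed : ∀ i, zClosed (Z i)
  covers : ∀ v ∈ cone X, v ≠ 0 → ∃ i, v ∉ Z i
  num : ι → ι → MvPolynomial (Fin (N + 1)) ℂ
  den : ι → ι → MvPolynomial (Fin (N + 1)) ℂ
  deg : ι → ι → ℕ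
  num_hom : ∀ i j, num i j ∈ homogeneousSubmodule (Fin (N + 1)) ℂ (deg i j)
  den_hom : ∀ i j, den i j ∈ homogeneousSubmodule (Fin (N + 1)) ℂ (deg i j)
  invertible : ∀ i j, ∀ v ∈ cone X, v ∉ Z i → v ∉ Z j →
    eval v (num i j) ≠ 0 ∧ eval v (den i j) ≠ 0
  cocycle : ∀ i j k, ∀ v ∈ cone X, v ∉ Z i → v ∉ Z j → v ∉ Z k →
    eval v (num i j) * eval v (num j k) * eval v (den i k) =
      eval v (num i k) * eval v (den i j) * eval v (den j k)

/-- The line bundle `L` is isomorphic to the `k`-th tensor power of `G`: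
on the common refinement of the two coverings, the transition functions of
`L` and the `k`-th power of those of `G` differ by a coboundary of invertible
degree-zero rational functions. -/
def PicPowerIso {N : ℕ} {X : Set (Proj N)} (L G : LineBundleData N X) (k : ℤ) : Prop :=
  ∃ a : L.ι × G.ι → MvPolynomial (Fin (N + 1)) ℂ,
  ∃ b : L.ι × G.ι → MvPolynomial (Fin (N + 1)) ℂ,
  ∃ d : L.ι × G.ι → ℕ,
    (∀ r, a r ∈ homogeneousSubmodule (Fin (N + 1)) ℂ (d r)) ∧
    (∀ r, b r ∈ homogeneousSubmodule (Fin (N + 1)) ℂ (d r)) ∧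
    (∀ i p, ∀ v ∈ cone X, v ∉ L.Z i → v ∉ G.Z p →
      eval v (a (i, p)) ≠ 0 ∧ eval v (b (i, p)) ≠ 0) ∧
    (∀ i j p q, ∀ v ∈ cone X, v ∉ L.Z i → v ∉ L.Z j → v ∉ G.Z p → v ∉ G.Z q →
      eval v (L.num i j) * eval v (b (i, p)) * eval v (a (j, q)) *
          eval v (G.den p q) ^ k.toNat * eval v (G.num p q) ^ (-k).toNat =
        eval v (L.den i j) * eval v (a (i, p)) * eval v (b (j, q)) *
          eval v (G.num p q) ^ k.toNat * eval v (G.den p q) ^ (-k).toNat)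

/-- The Picard group of `X` is cyclic: there is a line bundle of which every
line bundle is a tensor power, up to isomorphism. -/
def PicCyclic {N : ℕ} (X : Set (Proj N)) : Prop :=
  ∃ G : LineBundleData N X, ∀ L : LineBundleData N X, ∃ k : ℤ, PicPowerIso L G k

/-- `X` can be isomorphically projected into `ℙ^M`: there is a linear
projection which is injective on the points of `X` and on its embedded
tangent spaces. -/
def IsoProjectableTo {N : ℕ} (X : Set (Proj N)) (M : ℕ) : Prop :=
  ∃ π : (Aff N) →ₗ[ℂ] (Aff M),
    (∀ v ∈ cone X, v ≠ 0 → π v ≠ 0) ∧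
    (∀ v ∈ cone X, ∀ w ∈ cone X, v ≠ 0 → w ≠ 0 →
      Submodule.span ℂ {π v} = Submodule.span ℂ {π w} →
      Submodule.span ℂ {v} = Submodule.span ℂ {w}) ∧
    (∀ x ∈ X, projTangent X x ⊓ LinearMap.ker π = ⊥)

end

section

open MvPolynomial

/-! ### Differentials of polynomials and tangent spaces -/

theorem polyDiff_apply {ι : Type} [Fintype ι] (v w : ι → ℂ) (p : MvPolynomial ι ℂ) :
    polyDiff v p w = ∑ i, eval v (pderiv i p) * w i := by
  simp [polyDiff, LinearMap.sum_apply]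

/-- `polyDiff` is the directional derivative, which makes the chain rule available through
uniqueness of derivatives. -/
theorem hasDerivAt_polyDiff {ι : Type} [Fintype ι] (v w : ι → ℂ) (p : MvPolynomial ι ℂ) :
    HasDerivAt (fun t : ℂ => eval (v + t • w) p) (polyDiff v p w) 0 := by
  classical
  induction p using MvPolynomial.induction_on with
  | C a =>
    have h : polyDiff v (C a) w = 0 := by simp [polyDiff_apply]
    simpa [h] using hasDerivAt_const (0 : ℂ) a
  | add p q hp hq =>
    have h : polyDiff v (p + q) w = polyDiff v p w + polyDiff v q w := by
      simp [polyDiff_apply, add_mul, Finset.sum_add_distrib]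
    rw [h]
    simp only [map_add]
    exact hp.add hq
  | mul_X p i hp =>
    have h : polyDiff v (p * X i) w = polyDiff v p w * v i + eval v p * w i := by
      simp only [polyDiff_apply, Derivation.leibniz, pderiv_X, smul_eq_mul, map_add, map_mul,
        eval_X, add_mul, Finset.sum_add_distrib, Finset.sum_mul]
      rw [add_comm]
      congr 1
      · exact Finset.sum_congr rfl fun j _ => by ring
      · simp [Pi.single_apply, apply_ite]
    have h1 : HasDerivAt (fun t : ℂ => v i + t * w i) (w i) 0 := by
      simpa using ((hasDerivAt_id (0 : ℂ)).mul_const (w i)).const_add (v i)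
    rw [h]
    simpa only [map_mul, eval_X, Pi.add_apply, Pi.smul_apply, smul_eq_mul, zero_smul, add_zero,
      zero_mul] using! hp.mul h1

theorem polyDiff_eq_of_lines {ι κ : Type} [Fintype ι] [Fintype κ] {v w : ι → ℂ} {v' w' : κ → ℂ}
    {p : MvPolynomial ι ℂ} {q : MvPolynomial κ ℂ}
    (h : ∀ t : ℂ, eval (v + t • w) p = eval (v' + t • w') q) :
    polyDiff v p w = polyDiff v' q w' := by
  have h2 := hasDerivAt_polyDiff v' w' q
  rw [← funext h] at h2
  exact (hasDerivAt_polyDiff v w p).unique h2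

theorem mem_tangentAt {ι : Type} [Fintype ι] {V : Set (ι → ℂ)} {v w : ι → ℂ} :
    w ∈ tangentAt V v ↔ ∀ p ∈ vanishSet V, polyDiff v p w = 0 := by
  simp [tangentAt, Submodule.mem_iInf]

theorem mem_tangentAt_of_line {ι : Type} [Fintype ι] {V : Set (ι → ℂ)} {v w : ι → ℂ}
    (h : ∀ t : ℂ, v + t • w ∈ V) : w ∈ tangentAt V v := by
  refine mem_tangentAt.2 fun p hp => ?_
  have h1 : polyDiff v p w = polyDiff v (0 : MvPolynomial ι ℂ) w :=
    polyDiff_eq_of_lines fun t => by simpa using hp _ (h t)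
  simpa [polyDiff_apply] using h1

/-- Composition of a polynomial with the affine map `y ↦ a y + u`. -/
noncomputable def affSubst {ι : Type} (a : ℂ) (u : ι → ℂ) (p : MvPolynomial ι ℂ) : MvPolynomial ι ℂ :=
  bind₁ (fun i => C a * X i + C (u i)) p

theorem eval_affSubst {ι : Type} (a : ℂ) (u y : ι → ℂ) (p : MvPolynomial ι ℂ) :
    eval y (affSubst a u p) = eval (a • y + u) p := by
  have h : (eval y : MvPolynomial ι ℂ →+* ℂ) = eval₂Hom (RingHom.id ℂ) y := rfl
  rw [affSubst, h, eval₂Hom_bind₁]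
  simp only [coe_eval₂Hom, eval₂_add, eval₂_mul, eval₂_C, eval₂_X, RingHom.id_apply]
  rfl

/-- The inclusion in Terracini's lemma: if `a y + u` lies in `S` for every `y ∈ V`, with
`a ≠ 0`, then `T_v V ⊆ T_{a v + u} S`. -/
theorem tangentAt_le_of_join {ι : Type} [Fintype ι] {V S : Set (ι → ℂ)} {a : ℂ} (ha : a ≠ 0)
    {u : ι → ℂ} (h : ∀ y ∈ V, a • y + u ∈ S) (v : ι → ℂ) :
    tangentAt V v ≤ tangentAt S (a • v + u) := by
  intro w hw
  refine mem_tangentAt.2 fun p hp => ?_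
  have h1 := mem_tangentAt.1 hw (affSubst a u p) fun y hy => by
    rw [eval_affSubst]; exact hp _ (h y hy)
  have h2 : polyDiff v (affSubst a u p) w = polyDiff (a • v + u) p (a • w) :=
    polyDiff_eq_of_lines fun t => by
      rw [eval_affSubst]; congr 2; rw [smul_add, smul_comm]; abel_nf
  rw [h2, map_smul, smul_eq_mul] at h1
  exact (mul_eq_zero.1 h1).resolve_left ha

/-! ### Semicontinuity of tangent spaces -/

/-- The space of differentials at `v` of the polynomials vanishing on `V`. -/
noncomputable def conormal {ι : Type} [Fintype ι] (V : Set (ι → ℂ)) (v : ι → ℂ) :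
    Submodule ℂ (Module.Dual ℂ (ι → ℂ)) :=
  Submodule.span ℂ (polyDiff v '' vanishSet V)

theorem conormal_dualCoannihilator {ι : Type} [Fintype ι] (V : Set (ι → ℂ)) (v : ι → ℂ) :
    (conormal V v).dualCoannihilator = tangentAt V v := by
  refine SetLike.coe_injective ?_
  rw [conormal, Submodule.coe_dualCoannihilator_span]
  ext w
  simp [mem_tangentAt]

/-- Linearly independent linear forms admit a dual family of vectors. -/
theorem exists_dual_family {E : Type} [AddCommGroup E] [Module ℂ E] [FiniteDimensional ℂ E]
    {k : ℕ} {φ : Fin k → Module.Dual ℂ E} (h : LinearIndependent ℂ φ) :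
    ∃ b : Fin k → E, ∀ i j, φ i (b j) = if i = j then 1 else 0 := by
  classical
  let B : (Fin k → ℂ) →ₗ[ℂ] Module.Dual ℂ E := Fintype.linearCombination ℂ φ
  have hB : Function.Injective B := LinearIndependent.fintypeLinearCombination_injective h
  have hs : Function.Surjective B.flip := LinearMap.flip_surjective_iff₁.2 hB
  choose b hb using fun j => hs (LinearMap.proj j)
  refine ⟨b, fun i j => ?_⟩
  have := LinearMap.congr_fun (hb j) (Pi.single i 1)
  simpa [B, Fintype.linearCombination_apply_single, Pi.single_apply, eq_comm] using this

/-- A zero of `p` on `E` away from the origin remains a zero on the closure of `E`, away from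
the origin. -/
theorem eval_eq_zero_of_mem_zClosure {N : ℕ} {E : Set (Aff N)} {p : MvPolynomial (Fin (N + 1)) ℂ}
    (h : ∀ v ∈ E, v ≠ 0 → eval v p = 0) {y : Aff N} (hy : y ∈ zClosure E) (hy0 : y ≠ 0) :
    eval y p = 0 := by
  -- The products `X i * p` vanish at the origin as well, hence on the whole of `E`.
  have h1 : y ∈ {x : Aff N | ∀ q ∈ Set.range fun i : Fin (N + 1) => X i * p, eval x q = 0} := by
    refine hy _ ⟨⟨_, rfl⟩, ?_⟩
    rintro v hv _ ⟨i, rfl⟩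
    by_cases hv0 : v = 0
    · simp [hv0]
    · simp [h v hv hv0]
  obtain ⟨i, hi⟩ := Function.ne_iff.1 hy0
  have h2 := h1 _ ⟨i, rfl⟩
  simp only [map_mul, eval_X] at h2
  exact (mul_eq_zero.1 h2).resolve_left hi

/-- Where tangent spaces have constant dimension, the condition `T_v V ⊆ T` is Zariski closed in
`v`: for a form `ℓ` vanishing on `T` it says that the differentials of the equations of `V`
together with `ℓ` have rank no larger than the differentials alone. -/
theorem tangentAt_le_of_mem_zClosure {N m : ℕ} {V E : Set (Aff N)} {T : Submodule ℂ (Aff N)}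
    (hE : ∀ v ∈ E, v ≠ 0 → Module.finrank ℂ (tangentAt V v) = m ∧ tangentAt V v ≤ T)
    {y : Aff N} (hy : y ∈ zClosure E) (hy0 : y ≠ 0)
    (hym : Module.finrank ℂ (tangentAt V y) = m) : tangentAt V y ≤ T := by
  classical
  have hfin : ∀ v : Aff N, Module.finrank ℂ (tangentAt V v) = m →
      Module.finrank ℂ (conormal V v) + m = N + 1 := by
    intro v hv
    have := Subspace.finrank_add_finrank_dualCoannihilator_eq (conormal V v)
    rw [conormal_dualCoannihilator, hv] at this
    simpa using this
  have key : ∀ l ∈ T.dualAnnihilator, l ∈ conormal V y := by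
    intro l hl
    by_contra hly
    obtain ⟨f, hf, hfs, hfi⟩ :=
      Submodule.exists_fun_fin_finrank_span_eq ℂ (polyDiff y '' vanishSet V)
    choose p hp hpf using hf
    obtain ⟨b, hb⟩ := exists_dual_family
      (linearIndependent_finCons.2 ⟨hfi, (by rw [hfs]; exact hly : l ∉ _)⟩)
    -- Minors of the rows `ℓ, dp₁, …, dp_d`, taken along the vectors `b`, as a polynomial.
    let M : Matrix _ _ (MvPolynomial (Fin (N + 1)) ℂ) := Matrix.of fun i j =>
      (Fin.cons (C (l (b j))) (fun i => ∑ k, pderiv k (p i) * C (b j k)) :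
        Fin _ → MvPolynomial (Fin (N + 1)) ℂ) i
    have hM : ∀ v, eval v M.det = (Matrix.of fun i j =>
        (Fin.cons l (fun i => polyDiff v (p i)) : Fin _ → Module.Dual ℂ (Aff N)) i (b j)).det := by
      intro v
      rw [RingHom.map_det]
      congr 1
      ext i j
      refine Fin.cases ?_ (fun i => ?_) i
      · simp [M]
      · simp [M, polyDiff_apply]
    have h0 : eval y M.det = 0 := by
      refine eval_eq_zero_of_mem_zClosure (fun v hv hv0 => ?_) hy hy0
      obtain ⟨hvm, hvT⟩ := hE v hv hv0
      set ψ : Fin _ → Module.Dual ℂ (Aff N) := Fin.cons l (fun i => polyDiff v (p i)) with hψ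
      have hψm : ∀ i, ψ i ∈ conormal V v := by
        intro i
        refine Fin.cases ?_ (fun i => ?_) i
        · have h1 : (tangentAt V v).dualAnnihilator = conormal V v := by
            rw [← conormal_dualCoannihilator, Subspace.dualCoannihilator_dualAnnihilator_eq]
          rw [← h1]
          exact Submodule.dualAnnihilator_anti hvT hl
        · exact Submodule.subset_span ⟨p i, hp i, rfl⟩
      have hdep : ¬ LinearIndependent ℂ ψ := by
        intro hi
        have h1 : LinearIndependent ℂ (fun i => (⟨ψ i, hψm i⟩ : conormal V v)) :=
          LinearIndependent.of_comp (conormal V v).subtype hi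
        have h2 := h1.fintype_card_le_finrank
        have h3 := hfin v hvm
        have h4 := hfin y hym
        rw [Fintype.card_fin] at h2
        change Module.finrank ℂ (conormal V y) + 1 ≤ _ at h2
        omega
      obtain ⟨g, hg, i, hgi⟩ := Fintype.not_linearIndependent_iff.1 hdep
      rw [hM, ← Matrix.exists_vecMul_eq_zero_iff]
      refine ⟨g, fun h => hgi (congrFun h i), ?_⟩
      ext j
      simpa [Matrix.vecMul, dotProduct] using LinearMap.congr_fun hg (b j)
    rw [hM] at h0
    have h1 : (Matrix.of fun i j =>
        (Fin.cons l (fun i => polyDiff y (p i)) : Fin _ → Module.Dual ℂ (Aff N)) i (b j)) = 1 := by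
      ext i j
      rw [Matrix.of_apply, Matrix.one_apply, ← hb i j]
      congr 2
      exact funext hpf
    rw [h1, Matrix.det_one] at h0
    exact one_ne_zero h0
  rw [← conormal_dualCoannihilator,
    ← Subspace.dualAnnihilator_dualCoannihilator_eq (W := T)]
  exact Submodule.dualCoannihilator_anti key

/-! ### Subsets of full dimension -/

theorem vanishIdeal_isPrime {N : ℕ} {V : Set (Aff N)} (hV : zIrred V) :
    (vanishIdeal V).IsPrime := by
  refine ⟨fun h => ?_, fun {p q} hpq => ?_⟩
  · obtain ⟨v, hv⟩ := hV.1
    have h1 : (1 : MvPolynomial (Fin (N + 1)) ℂ) ∈ vanishIdeal V := h ▸ Submodule.mem_top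
    simpa using h1 v hv
  · have hz : ∀ r : MvPolynomial (Fin (N + 1)) ℂ, zClosed {x : Aff N | eval x r = 0} :=
      fun r => ⟨{r}, by simp⟩
    refine hV.2 _ _ (hz p) (hz q) fun v hv => ?_
    have := hpq v hv
    rw [map_mul] at this
    exact mul_eq_zero.1 this

theorem le_of_vanishIdeal_le {N : ℕ} {V W : Set (Aff N)} (hW : zClosed W)
    (h : vanishIdeal W ≤ vanishIdeal V) : V ⊆ W := by
  obtain ⟨s, rfl⟩ := hW
  exact fun v hv p hp => h (show p ∈ vanishIdeal _ from fun x hx => hx.out p hp) v hv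

/-- A chain of irreducible closed sets of maximal length `N + 1` ends in the whole space:
otherwise the associated chain of primes could be prolonged by `⊥`. -/
theorem eq_univ_of_le_adim {N : ℕ} {V : Set (Aff N)}
    (h : ((N + 1 : ℕ) : WithBot ℕ∞) ≤ adim V) : V = Set.univ := by
  obtain ⟨c, hc⟩ := Order.le_krullDim_iff.1 h
  let F : {W : Set (Aff N) // zClosed W ∧ zIrred W ∧ W ⊆ V} →
      (PrimeSpectrum (MvPolynomial (Fin (N + 1)) ℂ))ᵒᵈ :=
    fun W => OrderDual.toDual ⟨vanishIdeal W.1, vanishIdeal_isPrime W.2.2.1⟩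
  have hF : StrictMono F := by
    intro W W' hWW'
    refine lt_of_le_not_ge (fun p hp v hv => hp v (hWW'.le hv)) fun hle => hWW'.not_ge ?_
    exact le_of_vanishIdeal_le W.2.1 hle
  have hlast : vanishIdeal c.last.1 = ⊥ := by
    by_contra hne
    let d := (c.map F hF).snoc (OrderDual.toDual ⟨⊥, Ideal.isPrime_bot⟩)
      (lt_of_le_of_ne (fun p hp => by
          rw [show p = 0 from hp]; exact Ideal.zero_mem _)
        (fun he => hne (congrArg (fun P => (OrderDual.ofDual P).asIdeal)
          ((LTSeries.last_map c F hF).symm.trans he))))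
    have h1 := Order.LTSeries.length_le_krullDim d
    have h2 : Order.krullDim (PrimeSpectrum (MvPolynomial (Fin (N + 1)) ℂ))ᵒᵈ
        = ((N + 1 : ℕ) : WithBot ℕ∞) := by
      rw [Order.krullDim_orderDual]
      change ringKrullDim _ = _
      rw [MvPolynomial.ringKrullDim_of_isNoetherianRing, ringKrullDim_eq_zero_of_field]
      simp
    have h3 : d.length = N + 2 := by simp [d, hc]
    rw [h2, h3] at h1
    have : N + 2 ≤ N + 1 := by exact_mod_cast h1
    omega
  refine Set.eq_univ_of_univ_subset ((le_of_vanishIdeal_le c.last.2.1 ?_).trans c.last.2.2.2)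
  rw [hlast]
  exact bot_le

/-! ### Cones and secant varieties -/

theorem subset_zClosure {N : ℕ} (V : Set (Aff N)) : V ⊆ zClosure V :=
  fun _ hv _ hC => hC.2 hv

theorem mem_cone_of_ne {N : ℕ} {X : Set (Proj N)} {v : Aff N} (hv : v ≠ 0) :
    v ∈ cone X ↔ Projectivization.mk ℂ v hv ∈ X := by
  simp [cone, hv]

theorem zero_mem_cone {N : ℕ} (X : Set (Proj N)) : (0 : Aff N) ∈ cone X := Or.inr rfl

theorem rep_mem_cone {N : ℕ} {X : Set (Proj N)} {x : Proj N} : x.rep ∈ cone X ↔ x ∈ X := by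
  rw [mem_cone_of_ne x.rep_nonzero, x.mk_rep]

theorem smul_mem_cone {N : ℕ} {X : Set (Proj N)} {v : Aff N} (hv : v ∈ cone X) (a : ℂ) :
    a • v ∈ cone X := by
  by_cases hav : a • v = 0
  · rw [hav]; exact zero_mem_cone X
  · have hv0 : v ≠ 0 := fun h => hav (by simp [h])
    rw [mem_cone_of_ne hav]
    rw [mem_cone_of_ne hv0] at hv
    rwa [(Projectivization.mk_eq_mk_iff' ℂ _ _ hav hv0).2 ⟨a, rfl⟩]

theorem subset_pClosure {N : ℕ} (A : Set (Proj N)) : A ⊆ pClosure A :=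
  fun _ hx => subset_zClosure _ (rep_mem_cone.2 hx)

theorem not_mem_pClosure_empty {N : ℕ} (z : Proj N) : z ∉ pClosure (∅ : Set (Proj N)) := by
  intro hz
  refine one_ne_zero (α := ℂ) ?_
  have := eval_eq_zero_of_mem_zClosure (p := 1) (fun v hv hv0 => ?_) hz z.rep_nonzero
  · simp at this
  · exact ((mem_cone_of_ne hv0).1 hv).elim

theorem pClosure_subset {N : ℕ} {A X : Set (Proj N)} (hX : pClosed X) (h : A ⊆ X) :
    pClosure A ⊆ X := by
  intro x hx
  refine rep_mem_cone.1 (hx _ ⟨hX, fun v hv => ?_⟩)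
  by_cases hv0 : v = 0
  · rw [hv0]; exact zero_mem_cone X
  · rw [mem_cone_of_ne hv0] at hv ⊢
    exact h hv

theorem mem_pline {N : ℕ} {x y z : Proj N} :
    z ∈ pline x y ↔ z.submodule ≤ x.submodule ⊔ y.submodule := Iff.rfl

theorem mem_pline_left {N : ℕ} (x y : Proj N) : x ∈ pline x y :=
  mem_pline.2 le_sup_left

theorem mem_secantVar {N : ℕ} {X : Set (Proj N)} {x y z : Proj N} (hx : x ∈ X) (hy : y ∈ X)
    (hxy : x ≠ y) (hz : z ∈ pline x y) : z ∈ secantVar X :=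
  subset_pClosure _ ⟨x, hx, y, hy, hxy, hz⟩

/-- Unless `X` is a point, `cone (secantVar X)` contains all sums of two vectors of `cone X`, even
proportional or zero ones. -/
theorem add_mem_cone_secantVar {N : ℕ} {X : Set (Proj N)} {x₀ x₁ : Proj N} (h₀ : x₀ ∈ X)
    (h₁ : x₁ ∈ X) (hne : x₀ ≠ x₁) {u v : Aff N} (hu : u ∈ cone X) (hv : v ∈ cone X) :
    u + v ∈ cone (secantVar X) := by
  have hsub : cone X ⊆ cone (secantVar X) := by
    intro w hw
    by_cases hw0 : w = 0
    · rw [hw0]; exact zero_mem_cone _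
    rw [mem_cone_of_ne hw0] at hw ⊢
    by_cases h : Projectivization.mk ℂ w hw0 = x₀
    · exact mem_secantVar hw h₁ (h ▸ hne) (mem_pline_left _ _)
    · exact mem_secantVar hw h₀ h (mem_pline_left _ _)
  by_cases hu0 : u = 0
  · rw [hu0, zero_add]; exact hsub hv
  by_cases hv0 : v = 0
  · rw [hv0, add_zero]; exact hsub hu
  by_cases huv : u + v = 0
  · rw [huv]; exact zero_mem_cone _
  by_cases h : Projectivization.mk ℂ u hu0 = Projectivization.mk ℂ v hv0
  · obtain ⟨a, rfl⟩ := (Projectivization.mk_eq_mk_iff' ℂ _ _ hu0 hv0).1 h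
    have h1 : a • v + v = (a + 1) • v := by rw [add_smul, one_smul]
    rw [h1]
    exact hsub (smul_mem_cone hv _)
  · rw [mem_cone_of_ne huv]
    refine mem_secantVar ((mem_cone_of_ne hu0).1 hu) ((mem_cone_of_ne hv0).1 hv) h ?_
    rw [mem_pline]
    simp only [Projectivization.submodule_mk, Submodule.span_singleton_le_iff_mem]
    exact add_mem (Submodule.mem_sup_left (Submodule.mem_span_singleton_self u))
      (Submodule.mem_sup_right (Submodule.mem_span_singleton_self v))

theorem tangentAt_cone_eq {N : ℕ} (X : Set (Proj N)) {v : Aff N} (hv : v ≠ 0) :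
    tangentAt (cone X) v = projTangent X (Projectivization.mk ℂ v hv) := by
  have key : ∀ (a : ℂ) (w : Aff N), a ≠ 0 →
      tangentAt (cone X) w ≤ tangentAt (cone X) (a • w) := fun a w ha => by
    simpa using tangentAt_le_of_join (u := 0) ha
      (fun y hy => by simpa using smul_mem_cone hy a) w
  obtain ⟨a, ha⟩ := Projectivization.exists_smul_eq_mk_rep ℂ v hv
  rw [projTangent, ← ha]
  refine le_antisymm (key a v a.ne_zero) ?_
  have h := key (a : ℂ)⁻¹ ((a : ℂ) • v) (inv_ne_zero a.ne_zero)
  rwa [inv_smul_smul₀ a.ne_zero] at h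

theorem fsub_subset_cone {N n b : ℕ} {X : Set (Proj N)} (S : ScrollOn N X n b) {w : Proj S.M}
    (hw : w ∈ S.W) : (S.Fsub w : Set (Aff N)) ⊆ cone X := by
  intro v hv
  by_cases hv0 : v = 0
  · rw [hv0]; exact zero_mem_cone X
  rw [mem_cone_of_ne hv0, S.cover]
  refine Set.mem_biUnion hw ?_
  rw [Set.mem_ofPred_eq]
  rwa [Projectivization.submodule_mk, Submodule.span_singleton_le_iff_mem]

theorem exists_mem_fsub {N n b : ℕ} {X : Set (Proj N)} (S : ScrollOn N X n b) {v : Aff N}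
    (hv : v ∈ cone X) (hv0 : v ≠ 0) : ∃ w ∈ S.W, v ∈ S.Fsub w := by
  rw [mem_cone_of_ne hv0, S.cover] at hv
  obtain ⟨w, hw, h⟩ := Set.mem_iUnion₂.1 hv
  rw [Set.mem_ofPred_eq, Projectivization.submodule_mk, Submodule.span_singleton_le_iff_mem] at h
  exact ⟨w, hw, h⟩

end

/-- If `X` is a non-degenerate scroll, `z` a smooth point of `SX`, and the
entry locus `Σ_z` meets every fibre, then `SX = ℙ^N`. -/
theorem secant_full_of_entry_meets_fibres {N n b : ℕ} (X : Set (Proj N))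
    (hX : SmoothVariety X n) (hnd : Nondeg X) (S : ScrollOn N X n b)
    (z : Proj N) (hz : z ∈ secantVar X)
    (hsm : ((Module.finrank ℂ (projTangent (secantVar X) z) : ℕ) : WithBot ℕ∞) =
      adim (cone (secantVar X)))
    (hmeet : ∀ w ∈ S.W, (entryLocus X z ∩ S.fib w).Nonempty) :
    secantVar X = Set.univ := by
  obtain ⟨x₀, h₀, x₁, h₁, hne⟩ : ∃ x₀ ∈ X, ∃ x₁ ∈ X, x₀ ≠ x₁ := by
    by_contra hcon
    push Not at hcon
    have hemp : {z | ∃ y ∈ X, ∃ x ∈ X, y ≠ x ∧ z ∈ pline y x} = (∅ : Set (Proj N)) := by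
      ext t
      simp only [Set.mem_ofPred_eq, Set.mem_empty_iff_false, iff_false]
      rintro ⟨y, hy, x, hx, hyx, -⟩
      exact hyx (hcon y hy x hx)
    rw [secantVar, joinVar, hemp] at hz
    exact not_mem_pClosure_empty z hz
  have hadd : ∀ u ∈ cone X, ∀ v ∈ cone X, u + v ∈ cone (secantVar X) :=
    fun u hu v hv => add_mem_cone_secantVar h₀ h₁ hne hu hv
  obtain ⟨hcl, -, -, hsmooth⟩ := hX
  have hXT : cone X ⊆ projTangent (secantVar X) z := by
    by_cases hzX : z ∈ X
    · exact fun v hv => mem_tangentAt_of_line fun t =>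
        hadd _ (rep_mem_cone.2 hzX) _ (smul_mem_cone hv t)
    have hE : ∀ x ∈ X, (∃ x' ∈ X, x ≠ x' ∧ z ∈ pline x x') →
        projTangent X x ≤ projTangent (secantVar X) z := by
      rintro x - ⟨x', hx', -, hzl⟩
      rw [mem_pline, z.submodule_eq, x.submodule_eq, x'.submodule_eq,
        Submodule.span_singleton_le_iff_mem, Submodule.mem_sup] at hzl
      obtain ⟨_, hu, _, hv, huv⟩ := hzl
      obtain ⟨a, rfl⟩ := Submodule.mem_span_singleton.1 hu
      obtain ⟨c, rfl⟩ := Submodule.mem_span_singleton.1 hv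
      -- If the coefficient of `x` were zero, then `z = x'` would lie in `X`.
      have ha : a ≠ 0 := by
        rintro rfl
        refine hzX (rep_mem_cone.1 ?_)
        rw [← huv, zero_smul, zero_add]
        exact smul_mem_cone (rep_mem_cone.2 hx') c
      rw [projTangent, projTangent, ← huv]
      exact tangentAt_le_of_join ha (fun y hy => hadd _ (smul_mem_cone hy a) _
        (smul_mem_cone (rep_mem_cone.2 hx') c)) _
    intro v hv
    by_cases hv0 : v = 0
    · rw [hv0]; exact zero_mem _
    obtain ⟨w, hw, hvw⟩ := exists_mem_fsub S hv hv0
    obtain ⟨x, hxE, hxw⟩ := hmeet w hw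
    have hxX : x ∈ X := pClosure_subset hcl (fun _ h => h.1) hxE
    have hle : tangentAt (cone X) x.rep ≤ projTangent (secantVar X) z := by
      refine tangentAt_le_of_mem_zClosure (m := n + 1) (fun u hu hu0 => ?_) hxE x.rep_nonzero
        (hsmooth x hxX)
      rw [mem_cone_of_ne hu0] at hu
      rw [tangentAt_cone_eq X hu0]
      exact ⟨hsmooth _ hu.1, hE _ hu.1 hu.2⟩
    rw [ScrollOn.fib, Set.mem_ofPred_eq, x.submodule_eq, Submodule.span_singleton_le_iff_mem] at hxw
    exact hle (mem_tangentAt_of_line fun t =>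
      fsub_subset_cone S hw (add_mem hxw ((S.Fsub w).smul_mem t hvw)))
  have htop : projTangent (secantVar X) z = ⊤ :=
    top_le_iff.1 (hnd ▸ Submodule.span_le.2 hXT)
  have huniv : cone (secantVar X) = Set.univ := by
    refine eq_univ_of_le_adim (hsm ▸ ?_)
    rw [htop, finrank_top, Module.finrank_fin_fun]
  exact Set.eq_univ_of_forall fun y => rep_mem_cone.1 (huniv ▸ Set.mem_univ y.rep)
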